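/- If R = S ⊕ T is a ring direct sum where S is semisimple, then R has no middle class if and only if T has no middle class. (Sufficiency direction: if every right T-module is either T-injective or poor over T, then every right R-module is either injective or poor over R.) -/

import Mathlib

universe u v

/-- `M` is `N`-injective. -/
def RelInjective (R : Type u) [Ring R] (M N : Type v) [AddCommGroup M] [Module R M]
    [AddCommGroup N] [Module R N] : Prop :=
  ∀ (K : Submodule R N) (f : K →ₗ[R] M), ∃ g : N →ₗ[R] M, ∀ x : K, g x = f x

/-- `M` is poor: its injectivity domain consists exactly of the semisimple modules. -/
def Poor (R : Type u) [Ring R] (M : Type v) [AddCommGroup M] [Module R M] : Prop :=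
  ∀ (N : Type v) [AddCommGroup N] [Module R N], RelInjective R M N → IsSemisimpleModule R N

/-- `R` has no (right) middle class: every module is injective or poor. -/
def NoMiddleClass (R : Type u) [Ring R] : Prop :=
  ∀ (M : Type v) [AddCommGroup M] [Module R M], Module.Injective R M ∨ Poor R M

/-!
Write `e = (0, 1)`, a central idempotent of `R = S × T`. Every `R`-module `M` splits as
`e M ⊕ (1 - e) M`, where `e M` is a `T`-module and `(1 - e) M` is an `S`-module, hence semisimple.
Linear maps respect the splitting, so extending a map from a submodule of `N` to `M` only meets an
obstruction between `e N` and `e M`; and `N` is semisimple as soon as `e N` is. Hence `M` is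
injective or poor over `R` as soon as `e M` is so over `T`. Conversely, modules over a quotient
ring have the same submodules and linear maps as over the ring itself, so having no middle class
passes to quotient rings.
-/

section RelInjective

variable {R : Type*} [Ring R] {M M' N N' : Type v}
  [AddCommGroup M] [Module R M] [AddCommGroup M'] [Module R M']
  [AddCommGroup N] [Module R N] [AddCommGroup N'] [Module R N']

theorem injective_iff_forall_relInjective :
    Module.Injective R M ↔
      ∀ (N : Type v) [AddCommGroup N] [Module R N], RelInjective R M N := by
  refine ⟨fun h N _ _ K f ↦ h.out K.subtype K.injective_subtype f, fun h ↦ ⟨?_⟩⟩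
  intro X Y _ _ _ _ i hi f
  let e := LinearEquiv.ofInjective i hi
  obtain ⟨g, hg⟩ := h Y i.range (f ∘ₗ e.symm)
  exact ⟨g, fun x ↦ by simpa [e] using hg (e x)⟩

theorem RelInjective.of_isSemisimpleModule [IsSemisimpleModule R N] : RelInjective R M N := by
  intro K f
  obtain ⟨g, hg⟩ := IsSemisimpleModule.extension_property K.subtype K.injective_subtype f
  exact ⟨g, LinearMap.congr_fun hg⟩

theorem RelInjective.of_leftInverse (h : RelInjective R M N) (i : M' →ₗ[R] M) (p : M →ₗ[R] M')
    (hpi : Function.LeftInverse p i) : RelInjective R M' N := by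
  intro K f
  obtain ⟨g, hg⟩ := h K (i ∘ₗ f)
  exact ⟨p ∘ₗ g, fun x ↦ by simp [hg, hpi (f x)]⟩

theorem RelInjective.of_injective (h : RelInjective R M N) (i : N' →ₗ[R] N)
    (hi : Function.Injective i) : RelInjective R M N' := by
  intro K f
  let e := K.equivMapOfInjective i hi
  obtain ⟨g, hg⟩ := h (K.map i) (f ∘ₗ e.symm)
  exact ⟨g ∘ₗ i, fun x ↦ by simpa [e] using hg (e x)⟩

theorem RelInjective.of_isCompl {p q : Submodule R M} (hpq : IsCompl p q)
    (hp : RelInjective R p N) (hq : RelInjective R q N) : RelInjective R M N := by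
  intro K f
  obtain ⟨g, hg⟩ := hp K (p.projectionOnto q hpq ∘ₗ f)
  obtain ⟨g', hg'⟩ := hq K (q.projectionOnto p hpq.symm ∘ₗ f)
  exact ⟨p.subtype ∘ₗ g + q.subtype ∘ₗ g', fun x ↦ by
    simpa [hg, hg'] using Submodule.projection_add_projection_eq_self hpq (f x)⟩

end RelInjective

theorem isSemisimpleModule_of_isCompl {R M : Type*} [Ring R] [AddCommGroup M] [Module R M]
    {p q : Submodule R M} (hpq : IsCompl p q) (hp : IsSemisimpleModule R p)
    (hq : IsSemisimpleModule R q) : IsSemisimpleModule R M := by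
  have hsup := hp.sup hq
  rw [hpq.sup_eq_top] at hsup
  exact .congr Submodule.topEquiv.symm

section ChangeOfRings

variable {R T : Type*} [Ring R] [Ring T]

theorem RelInjective.of_range_toAddMonoidEnd_eq {M N : Type v}
    [AddCommGroup M] [Module R M] [Module T M] [AddCommGroup N] [Module R N] [Module T N]
    (hRT : (Module.toAddMonoidEnd R (M × N)).range = (Module.toAddMonoidEnd T (M × N)).range)
    (h : RelInjective R M N) : RelInjective T M N := by
  have exists_R (t : T) : ∃ r : R, ∀ x : M × N, r • x = t • x := by
    obtain ⟨r, hr⟩ := hRT.ge ⟨t, rfl⟩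
    exact ⟨r, DFunLike.congr_fun hr⟩
  have exists_T (r : R) : ∃ t : T, ∀ x : M × N, t • x = r • x := by
    obtain ⟨t, ht⟩ := hRT.le ⟨r, rfl⟩
    exact ⟨t, DFunLike.congr_fun ht⟩
  simp only [Prod.forall, Prod.smul_mk, Prod.mk.injEq] at exists_R exists_T
  intro K f
  let K' : Submodule R N :=
    { K.toAddSubmonoid with
      smul_mem' r x hx := by
        obtain ⟨t, ht⟩ := exists_T r
        rw [← (ht 0 x).2]
        exact K.smul_mem t hx }
  let f' : K' →ₗ[R] M :=
    { toFun x := f ⟨x, x.2⟩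
      map_add' x y := f.map_add ⟨x, x.2⟩ ⟨y, y.2⟩
      map_smul' r x := by
        obtain ⟨t, ht⟩ := exists_T r
        rw [RingHom.id_apply, ← (ht _ 0).1, ← f.map_smul]
        exact congr_arg f (Subtype.ext (ht 0 x).2.symm) }
  obtain ⟨g, hg⟩ := h K' f'
  let g' : N →ₗ[T] M :=
    { g with
      map_smul' t x := by
        obtain ⟨r, hr⟩ := exists_R t
        change g (t • x) = t • g x
        rw [← (hr 0 x).2, g.map_smul, (hr _ 0).1] }
  exact ⟨g', fun x ↦ hg ⟨x, x.2⟩⟩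

variable {φ : R →+* T}

theorem relInjective_iff_of_surjective (hφ : Function.Surjective φ) {M N : Type v}
    [AddCommGroup M] [Module R M] [Module T M] [AddCommGroup N] [Module R N] [Module T N]
    (hM : ∀ (r : R) (m : M), φ r • m = r • m) (hN : ∀ (r : R) (n : N), φ r • n = r • n) :
    RelInjective R M N ↔ RelInjective T M N := by
  have hcomp : Module.toAddMonoidEnd R (M × N) = (Module.toAddMonoidEnd T (M × N)).comp φ := by
    ext r x
    exacts [(hM r x.1).symm, (hN r x.2).symm]
  have hrange :
      (Module.toAddMonoidEnd R (M × N)).range = (Module.toAddMonoidEnd T (M × N)).range := by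
    rw [hcomp, ← RingHom.map_range, RingHom.range_eq_top.2 hφ, ← RingHom.range_eq_map]
  exact ⟨.of_range_toAddMonoidEnd_eq hrange, .of_range_toAddMonoidEnd_eq hrange.symm⟩

theorem isSemisimpleModule_iff_of_surjective (hφ : Function.Surjective φ) {N : Type*}
    [AddCommGroup N] [Module R N] [Module T N] (hN : ∀ (r : R) (n : N), φ r • n = r • n) :
    IsSemisimpleModule R N ↔ IsSemisimpleModule T N := by
  have : RingHomSurjective φ := ⟨hφ⟩
  let idₛₗ : N →ₛₗ[φ] N :=
    { toFun := id
      map_add' _ _ := rfl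
      map_smul' r n := (hN r n).symm }
  exact idₛₗ.isSemisimpleModule_iff_of_bijective Function.bijective_id

theorem exists_module_of_ker_smul_eq_zero (hφ : Function.Surjective φ) {M : Type*}
    [AddCommGroup M] [Module R M] (hker : ∀ r, φ r = 0 → ∀ m : M, r • m = 0) :
    ∃ _ : Module T M, ∀ (r : R) (m : M), φ r • m = r • m := by
  let : SMul T M := ⟨fun t m ↦ Function.surjInv hφ t • m⟩
  have smul_def (r : R) (m : M) : φ r • m = r • m := by
    refine sub_eq_zero.1 ((sub_smul _ r m).symm.trans (hker _ ?_ m))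
    rw [map_sub, Function.surjInv_eq hφ, sub_self]
  exact ⟨hφ.moduleLeft φ smul_def, smul_def⟩

theorem NoMiddleClass.of_surjective (hφ : Function.Surjective φ)
    (hR : NoMiddleClass.{_, v} R) : NoMiddleClass.{_, v} T := by
  intro M _ _
  let : Module R M := .compHom M φ
  refine (hR M).imp (fun hM ↦ ?_) fun hM N _ _ hMN ↦ ?_
  · rw [injective_iff_forall_relInjective] at hM ⊢
    intro N _ _
    let : Module R N := .compHom N φ
    exact (relInjective_iff_of_surjective hφ (fun _ _ ↦ rfl) fun _ _ ↦ rfl).1 (hM N)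
  · let : Module R N := .compHom N φ
    rw [← relInjective_iff_of_surjective hφ (fun _ _ ↦ rfl) fun _ _ ↦ rfl] at hMN
    exact (isSemisimpleModule_iff_of_surjective hφ fun _ _ ↦ rfl).1 (hM N hMN)

end ChangeOfRings

section CentralComponent

variable {R T : Type*} [Ring R] [Ring T] {e : Subring.center R}

/-- The submodule `e M` of an `R`-module `M`, for a central element `e` of `R`. When `e` is
idempotent, it is the direct summand of `M` on which `e` acts as the identity. -/
def centralComponent (e : Subring.center R) (M : Type*) [AddCommGroup M] [Module R M] :
    Submodule R M :=
  (Module.toModuleEnd R M e).range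

theorem smul_eq_self_of_mem_centralComponent (he : IsIdempotentElem e) {M : Type*}
    [AddCommGroup M] [Module R M] {m : M} (hm : m ∈ centralComponent e M) : (e : R) • m = m :=
  (LinearMap.IsIdempotentElem.mem_range_iff (he.map (Module.toModuleEnd R M))).1 hm

theorem isCompl_centralComponent (he : IsIdempotentElem e) (M : Type*)
    [AddCommGroup M] [Module R M] :
    IsCompl (centralComponent e M) (centralComponent (1 - e) M) := by
  have heM := he.map (Module.toModuleEnd R M)
  rw [centralComponent, centralComponent, map_sub, map_one,
    ← LinearMap.IsIdempotentElem.ker_eq_range_one_sub heM]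
  exact LinearMap.IsIdempotentElem.isCompl heM

theorem RelInjective.of_centralComponent {M N : Type v} [AddCommGroup M] [Module R M]
    [AddCommGroup N] [Module R N] (heM : ∀ m : M, (e : R) • m = m)
    (h : RelInjective R M (centralComponent e N)) : RelInjective R M N := by
  intro K f
  let toComponent : N →ₗ[R] centralComponent e N := (Module.toModuleEnd R N e).rangeRestrict
  let K' := K.comap (centralComponent e N).subtype
  obtain ⟨g, hg⟩ := h K' (f ∘ₗ (centralComponent e N).subtype.restrict fun _ hx ↦ hx)
  refine ⟨g ∘ₗ toComponent, fun x ↦ ?_⟩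
  calc g (toComponent x) = f ((e : R) • x) := hg ⟨toComponent x, K.smul_mem (e : R) x.2⟩
    _ = f x := by rw [map_smul, heM]

protected theorem RelInjective.centralComponent (he : IsIdempotentElem e) {M N : Type v}
    [AddCommGroup M] [Module R M] [AddCommGroup N] [Module R N] (h : RelInjective R M N) :
    RelInjective R (centralComponent e M) (centralComponent e N) :=
  (h.of_leftInverse (Submodule.subtype _)
    (Submodule.projectionOnto _ _ (isCompl_centralComponent he M))
    (Submodule.projectionOnto_apply_left _)).of_injective _ (Submodule.injective_subtype _)

theorem exists_module_centralComponent (he : IsIdempotentElem e) {φ : R →+* T}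
    (hφ : Function.Surjective φ) (hker : ∀ r, φ r = 0 → r * e = 0)
    (M : Type*) [AddCommGroup M] [Module R M] :
    ∃ _ : Module T (centralComponent e M),
      ∀ (r : R) (m : centralComponent e M), φ r • m = r • m := by
  refine exists_module_of_ker_smul_eq_zero hφ fun r hr m ↦ Subtype.ext ?_
  calc r • (m : M) = (r * e) • (m : M) := by
        rw [mul_smul, smul_eq_self_of_mem_centralComponent he m.2]
    _ = 0 := by rw [hker r hr, zero_smul]

theorem isSemisimpleModule_centralComponent [IsSemisimpleRing T] (he : IsIdempotentElem e)
    {φ : R →+* T} (hφ : Function.Surjective φ) (hker : ∀ r, φ r = 0 → r * e = 0)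
    (M : Type*) [AddCommGroup M] [Module R M] : IsSemisimpleModule R (centralComponent e M) := by
  obtain ⟨_, hsmul⟩ := exists_module_centralComponent he hφ hker M
  exact (isSemisimpleModule_iff_of_surjective hφ hsmul).2 inferInstance

theorem injective_of_relInjective_centralComponent (he : IsIdempotentElem e) {M : Type v}
    [AddCommGroup M] [Module R M]
    (hss : ∀ (N : Type v) [AddCommGroup N] [Module R N],
      IsSemisimpleModule R (centralComponent (1 - e) N))
    (hM : ∀ (N : Type v) [AddCommGroup N] [Module R N],
      RelInjective R (centralComponent e M) (centralComponent e N)) :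
    Module.Injective R M := by
  rw [injective_iff_forall_relInjective]
  intro N _ _
  refine .of_isCompl (isCompl_centralComponent he M) ?_ ?_
  · exact .of_centralComponent
      (fun m ↦ Subtype.ext (smul_eq_self_of_mem_centralComponent he m.2)) (hM N)
  · have := hss N
    exact .of_centralComponent
      (fun m ↦ Subtype.ext (smul_eq_self_of_mem_centralComponent he.one_sub m.2))
      .of_isSemisimpleModule

theorem NoMiddleClass.of_centralComponent (he : IsIdempotentElem e) {φ : R →+* T}
    (hφ : Function.Surjective φ) (hker : ∀ r, φ r = 0 → r * e = 0)
    (hss : ∀ (N : Type v) [AddCommGroup N] [Module R N],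
      IsSemisimpleModule R (centralComponent (1 - e) N))
    (hT : NoMiddleClass.{_, v} T) : NoMiddleClass.{_, v} R := by
  intro M _ _
  obtain ⟨_, hM⟩ := exists_module_centralComponent he hφ hker M
  refine (hT (centralComponent e M)).imp (fun hinj ↦ ?_) fun hpoor N _ _ hMN ↦ ?_
  · refine injective_of_relInjective_centralComponent he hss fun N _ _ ↦ ?_
    obtain ⟨_, hN⟩ := exists_module_centralComponent he hφ hker N
    exact (relInjective_iff_of_surjective hφ hM hN).2
      (injective_iff_forall_relInjective.1 hinj _)
  · obtain ⟨_, hN⟩ := exists_module_centralComponent he hφ hker N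
    have hMN' := (relInjective_iff_of_surjective hφ hM hN).1 (hMN.centralComponent he)
    have heN := (isSemisimpleModule_iff_of_surjective hφ hN).2 (hpoor _ hMN')
    exact isSemisimpleModule_of_isCompl (isCompl_centralComponent he N) heN (hss N)

end CentralComponent

theorem NoMiddleClass.prod {S T : Type*} [Ring S] [Ring T] (hS : IsSemisimpleRing S)
    (hT : NoMiddleClass.{_, v} T) : NoMiddleClass.{_, v} (S × T) := by
  let e : Subring.center (S × T) :=
    ⟨(0, 1), Subring.center_prod.ge ⟨Subring.zero_mem _, Subring.one_mem _⟩⟩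
  have he : IsIdempotentElem e := Subtype.ext (by simp [e])
  refine hT.of_centralComponent he (φ := RingHom.snd S T) Prod.snd_surjective ?_ fun N _ _ ↦ ?_
  · exact fun r hr ↦ Prod.ext (mul_zero _) (by simpa [e] using hr)
  · exact isSemisimpleModule_centralComponent he.one_sub (φ := RingHom.fst S T)
      Prod.fst_surjective (fun r hr ↦ Prod.ext (by simpa [e] using hr) (by simp [e])) N

/-- If `R = S ⊕ T` is a ring direct sum with `S` semisimple, then `R` has no middle class
iff `T` has no middle class. -/
theorem stmt_1 (S T : Type u) [Ring S] [Ring T] (hS : IsSemisimpleRing S) :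
    NoMiddleClass.{u, v} (S × T) ↔ NoMiddleClass.{u, v} T :=
  ⟨.of_surjective (φ := RingHom.snd S T) Prod.snd_surjective, .prod hS⟩
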